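/- Let R be the quotient of ℂ⟨e1,e2,e3⟩ by the two-sided ideal generated by e1e2 − e2e1 − e2, e1e3 − e3e1, e2e3 + e3e2, and e3². Then h_0 = 1 and h_n = 2 for every n ≥ 1; equivalently, the Poincaré series Σ_{n≥0} h_n z^n equals (1+z)/(1−z). -/

import Mathlib

open CategoryTheory FreeAlgebra

/-- `Ext^m_R(ℂ,ℂ)` as a ℂ-module, where `ℂ` is an `R`-module via the augmentation `ε`. -/
noncomputable def extC (R : Type) [Ring R] [Algebra ℂ R] (ε : R →ₐ[ℂ] ℂ) (m : ℕ) :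
    ModuleCat ℂ :=
  letI : Module R ℂ := Module.compHom ℂ ε.toRingHom
  ((Ext ℂ (ModuleCat R) m).obj (Opposite.op (ModuleCat.of R ℂ))).obj (ModuleCat.of R ℂ)

/-- `h_m = dim_ℂ Ext^m_R(ℂ,ℂ)`. -/
noncomputable def extDim (R : Type) [Ring R] [Algebra ℂ R] (ε : R →ₐ[ℂ] ℂ) (m : ℕ) : ℕ :=
  Module.finrank ℂ (extC R ε m)

/-- Relations: `e1e2 - e2e1 = e2`, `e1e3 - e3e1 = 0`, `e2e3 + e3e2 = 0`, `e3² = 0`. -/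
inductive CRel : FreeAlgebra ℂ (Fin 3) → FreeAlgebra ℂ (Fin 3) → Prop
  | r12 : CRel (ι ℂ 0 * ι ℂ 1 - ι ℂ 1 * ι ℂ 0) (ι ℂ 1)
  | r13 : CRel (ι ℂ 0 * ι ℂ 2 - ι ℂ 2 * ι ℂ 0) 0
  | r23 : CRel (ι ℂ 1 * ι ℂ 2 + ι ℂ 2 * ι ℂ 1) 0
  | r33 : CRel (ι ℂ 2 * ι ℂ 2) 0

/-!
The relations say that `R` is a skew polynomial ring in `e2` over `ℂ[e1][e3]/(e3²)`, where moving
`e2` past a coefficient substitutes `e1 ↦ e1 - 1` and `e3 ↦ -e3`. Comparing coefficients of `e2`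
shows that `e1`, `e2`, `e3` have only the syzygies forced by the relations, which gives a free
resolution of `ℂ` of ranks `1, 3, 4, 4, …`: a twisted Koszul complex on `e1`, `e2` combined with
the periodic resolution for `e3² = 0`. The twist puts the entry `e1 - 1` into every differential
beyond the first, and `ε` kills all entries except this one. So `Hom(-, ℂ)` has differentials of
ranks `0, 1, 1, …`, and `h₀ = 1 - 0`, `h₁ = 3 - 0 - 1`, `hₙ = 4 - 1 - 1` for `n ≥ 2`.
-/

namespace ColorLie

universe u v

section Homology

variable {k : Type u} [Field k]

theorem finrank_homology_add_finrank_range (S : ShortComplex (ModuleCat.{v} k))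
    [FiniteDimensional k S.X₂] :
    Module.finrank k S.homology + Module.finrank k (LinearMap.range S.f.hom) +
      Module.finrank k (LinearMap.range S.g.hom) = Module.finrank k S.X₂ := by
  have boundaries : Module.finrank k (LinearMap.range S.moduleCatToCycles) =
      Module.finrank k (LinearMap.range S.f.hom) := by
    have comp_subtype : S.f.hom = (LinearMap.ker S.g.hom).subtype ∘ₗ S.moduleCatToCycles := rfl
    rw [comp_subtype, LinearMap.range_comp, Submodule.finrank_map_subtype_eq]
  rw [S.moduleCatHomologyIso.toLinearEquiv.finrank_eq, ← boundaries]
  exact (congrArg (· + _) (Submodule.finrank_quotient_add_finrank _)).trans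
    ((add_comm _ _).trans S.g.hom.finrank_range_add_finrank_ker)

theorem finrank_range_eq_of_comm {V W V' W' : Type*} [AddCommGroup V] [Module k V]
    [AddCommGroup W] [Module k W] [AddCommGroup V'] [Module k V'] [AddCommGroup W'] [Module k W']
    {f : V →ₗ[k] W} {g : V' →ₗ[k] W'} (e : V ≃ₗ[k] V') (e' : W ≃ₗ[k] W')
    (comm : ∀ x, e' (f x) = g (e x)) :
    Module.finrank k (LinearMap.range f) = Module.finrank k (LinearMap.range g) := by
  have comm' : e'.toLinearMap ∘ₗ f = g ∘ₗ e.toLinearMap := LinearMap.ext comm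
  rw [← LinearMap.range_comp_of_range_eq_top g e.range, ← comm', LinearMap.range_comp]
  exact (e'.finrank_map_eq _).symm

variable {C : Type*} [Category.{v} C] [Abelian C] [Linear k C]

theorem finrank_linearYonedaObj_homology_zero (K : ChainComplex C ℕ) (Z : C)
    [FiniteDimensional k (K.X 0 ⟶ Z)] :
    Module.finrank k ((K.linearYonedaObj k Z).homology 0) +
      Module.finrank k (LinearMap.range (Linear.leftComp k Z (K.d 1 0))) =
        Module.finrank k (K.X 0 ⟶ Z) := by
  rw [((K.linearYonedaObj k Z).homologyIsoSc' 0 0 1 (by simp) (by simp)).toLinearEquiv.finrank_eq]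
  have incoming : ((K.linearYonedaObj k Z).sc' 0 0 1).f = 0 :=
    (K.linearYonedaObj k Z).shape 0 0 (by simp)
  have : FiniteDimensional k ((K.linearYonedaObj k Z).sc' 0 0 1).X₂ :=
    inferInstanceAs (FiniteDimensional k (K.X 0 ⟶ Z))
  have count := finrank_homology_add_finrank_range ((K.linearYonedaObj k Z).sc' 0 0 1)
  rw [incoming, ModuleCat.hom_zero, LinearMap.range_zero, finrank_bot, add_zero] at count
  exact count

theorem finrank_linearYonedaObj_homology_succ (K : ChainComplex C ℕ) (Z : C) (n : ℕ)
    [FiniteDimensional k (K.X (n + 1) ⟶ Z)] :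
    Module.finrank k ((K.linearYonedaObj k Z).homology (n + 1)) +
      Module.finrank k (LinearMap.range (Linear.leftComp k Z (K.d (n + 1) n))) +
      Module.finrank k (LinearMap.range (Linear.leftComp k Z (K.d (n + 2) (n + 1)))) =
        Module.finrank k (K.X (n + 1) ⟶ Z) := by
  rw [((K.linearYonedaObj k Z).homologyIsoSc' n (n + 1) (n + 2)
    (by simp) (by simp)).toLinearEquiv.finrank_eq]
  have : FiniteDimensional k ((K.linearYonedaObj k Z).sc' n (n + 1) (n + 2)).X₂ :=
    inferInstanceAs (FiniteDimensional k (K.X (n + 1) ⟶ Z))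
  exact finrank_homology_add_finrank_range ((K.linearYonedaObj k Z).sc' n (n + 1) (n + 2))

end Homology

section ModuleResolution

variable {R : Type u} [Ring R] {X : ℕ → ModuleCat.{v} R} {d : ∀ n, X (n + 1) ⟶ X n}

theorem comp_eq_zero_of_exact {L M N : ModuleCat.{v} R} {f : L ⟶ M} {g : M ⟶ N}
    (exact : Function.Exact f g) : f ≫ g = 0 :=
  ConcreteCategory.hom_ext _ _ exact.apply_apply_eq_zero

theorem exactAt_succ_of_exact (exact : ∀ n, Function.Exact (d (n + 1)) (d n)) (n : ℕ) :
    (ChainComplex.of X d fun n => comp_eq_zero_of_exact (exact n)).ExactAt (n + 1) := by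
  have exact_mk : (ShortComplex.mk (d (n + 1)) (d n) (comp_eq_zero_of_exact (exact n))).Exact :=
    (ShortComplex.ShortExact.moduleCat_exact_iff_function_exact _).2 (exact n)
  rw [HomologicalComplex.exactAt_iff' _ (n + 2) (n + 1) n (by simp) (by simp)]
  refine (ShortComplex.exact_iff_of_iso ?_).2 exact_mk
  refine ShortComplex.isoMk (Iso.refl _) (Iso.refl _) (Iso.refl _) ?_ ?_
  · exact (Category.id_comp _).trans
      ((ChainComplex.of_d X d (n + 1)).symm.trans (Category.comp_id _).symm)
  · exact (Category.id_comp _).trans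
      ((ChainComplex.of_d X d n).symm.trans (Category.comp_id _).symm)

variable {Z : ModuleCat.{v} R} {π : X 0 ⟶ Z}

theorem of_d_comp_eq_zero (sq : ∀ n, d (n + 1) ≫ d n = 0) (exact : Function.Exact (d 0) π) :
    (ChainComplex.of X d sq).d 1 0 ≫ π = 0 :=
  (congrArg (· ≫ π) (ChainComplex.of_d X d 0)).trans (comp_eq_zero_of_exact exact)

theorem quasiIsoAt_zero_of_exact (sq : ∀ n, d (n + 1) ≫ d n = 0)
    (exact_aug : Function.Exact (d 0) π) (surjective : Function.Surjective π) :
    QuasiIsoAt ((ChainComplex.toSingle₀Equiv (ChainComplex.of X d sq) Z).symm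
      ⟨π, of_d_comp_eq_zero sq exact_aug⟩) 0 := by
  have exact_epi : (ShortComplex.mk (d 0) π (comp_eq_zero_of_exact exact_aug)).Exact ∧ Epi π :=
    ⟨(ShortComplex.ShortExact.moduleCat_exact_iff_function_exact _).2 exact_aug,
      (ModuleCat.epi_iff_surjective _).2 surjective⟩
  rw [ChainComplex.quasiIsoAt₀_iff, ShortComplex.quasiIso_iff_of_zeros' _ rfl rfl rfl]
  refine (ShortComplex.exact_and_epi_g_iff_of_iso ?_).2 exact_epi
  refine ShortComplex.isoMk (Iso.refl _) (Iso.refl _) (Iso.refl _) ?_ ?_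
  · exact (Category.id_comp _).trans
      ((ChainComplex.of_d X d 0).symm.trans (Category.comp_id _).symm)
  · exact (Category.id_comp _).trans
      ((ChainComplex.toSingle₀Equiv_symm_apply_f_zero (C := ChainComplex.of X d sq) π
        (of_d_comp_eq_zero sq exact_aug)).symm.trans (Category.comp_id _).symm)

/-- The projective resolution of `Z` given by an exact sequence of modules
`⋯ ⟶ X 2 ⟶ X 1 ⟶ X 0 ⟶ Z ⟶ 0` with every `X n` projective. -/
noncomputable def resolutionOfExact [∀ n, Projective (X n)]
    (exact : ∀ n, Function.Exact (d (n + 1)) (d n)) (exact_aug : Function.Exact (d 0) π)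
    (surjective : Function.Surjective π) : ProjectiveResolution Z where
  complex := ChainComplex.of X d fun n => comp_eq_zero_of_exact (exact n)
  projective n := inferInstanceAs (Projective (X n))
  π := (ChainComplex.toSingle₀Equiv _ _).symm ⟨π, of_d_comp_eq_zero _ exact_aug⟩
  quasiIso := ⟨fun
    | 0 => quasiIsoAt_zero_of_exact _ exact_aug surjective
    | n + 1 => (quasiIsoAt_iff_exactAt' _ _ (ChainComplex.exactAt_succ_single_obj _ _)).2
        (exactAt_succ_of_exact exact n)⟩

end ModuleResolution

section TrivialModule

variable {k R : Type u} [Field k] [Ring R] [Algebra k R] (ε : R →ₐ[k] k)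

/-- The ground field `k`, regarded as an `R`-module through the augmentation `ε`. -/
abbrev trivialModule : ModuleCat.{u} R :=
  letI : Module R k := Module.compHom k ε.toRingHom
  ModuleCat.of R k

theorem hom_trivialModule_smul_apply {M : ModuleCat.{u} R} (z : k) (f : M ⟶ trivialModule ε)
    (m : M) : ((z • f) m : k) = z * (f m : k) :=
  congrArg (· * (f m : k)) (ε.commutes z)

/-- Evaluation of a morphism `R^ι ⟶ k` at the standard basis vectors. -/
def evalBasis (ι : Type) [DecidableEq ι] :
    (ModuleCat.of R (ι → R) ⟶ trivialModule ε) →ₗ[k] (ι → k) where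
  toFun f i := f (Pi.single i 1 : ι → R)
  map_add' _ _ := rfl
  map_smul' z f := funext fun i => hom_trivialModule_smul_apply ε z f (Pi.single i 1 : ι → R)

theorem hom_trivialModule_apply {ι : Type} [Fintype ι] [DecidableEq ι]
    (f : ModuleCat.of R (ι → R) ⟶ trivialModule ε) (v : ι → R) :
    (f v : k) = ∑ i, ε (v i) * evalBasis ε ι f i := by
  let : Module R k := Module.compHom k ε.toRingHom
  change (f.hom : (ι → R) →ₗ[R] k) v = _
  conv_lhs => rw [pi_eq_sum_univ' v, map_sum]
  exact Finset.sum_congr rfl fun i _ => map_smul (f.hom : (ι → R) →ₗ[R] k) (v i) _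

theorem evalBasis_bijective (ι : Type) [Finite ι] [DecidableEq ι] :
    Function.Bijective (evalBasis (R := R) ε ι) := by
  cases nonempty_fintype ι
  let : Module R k := Module.compHom k ε.toRingHom
  refine ⟨fun f g eval_eq => ConcreteCategory.hom_ext _ _ fun v => ?_, fun w =>
    ⟨ModuleCat.ofHom ((Pi.basisFun R ι).constr ℕ w), funext fun i => ?_⟩⟩
  · exact (hom_trivialModule_apply ε f v).trans
      (eval_eq ▸ (hom_trivialModule_apply ε g v).symm)
  · change (Pi.basisFun R ι).constr ℕ w (Pi.single i 1) = w i
    rw [← Pi.basisFun_apply, Module.Basis.constr_basis]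

/-- Morphisms `R^ι ⟶ k` are the vectors of their values on the standard basis. -/
noncomputable def freeHomEquiv (ι : Type) [Finite ι] [DecidableEq ι] :
    (ModuleCat.of R (ι → R) ⟶ trivialModule ε) ≃ₗ[k] (ι → k) :=
  LinearEquiv.ofBijective (evalBasis ε ι) (evalBasis_bijective ε ι)

variable {ι κ : Type} [Fintype ι] [Fintype κ]

theorem freeHomEquiv_vecMulLinear_comp [DecidableEq ι] [DecidableEq κ] (D : Matrix κ ι R)
    (f : ModuleCat.of R (ι → R) ⟶ trivialModule ε) :
    freeHomEquiv ε κ (ModuleCat.ofHom D.vecMulLinear ≫ f) =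
      (D.map ε).mulVecLin (freeHomEquiv ε ι f) := by
  ext i
  refine (hom_trivialModule_apply ε f (Matrix.vecMul (Pi.single i 1) D)).trans ?_
  simp only [Matrix.single_one_vecMul]
  rfl

theorem finrank_range_leftComp_vecMulLinear (D : Matrix κ ι R) :
    Module.finrank k (LinearMap.range
      (Linear.leftComp k (trivialModule ε) (ModuleCat.ofHom D.vecMulLinear))) =
      (D.map ε).rank := by
  classical
  exact finrank_range_eq_of_comm (freeHomEquiv ε ι) (freeHomEquiv ε κ)
    (freeHomEquiv_vecMulLinear_comp ε D)

end TrivialModule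

section FreeResolution

variable {k R : Type u} [Field k] [Ring R] [Algebra k R]
variable {ι : ℕ → Type} [∀ n, Fintype (ι n)] [Unique (ι 0)]

open Matrix in
/-- The matrices `D n` are the differentials of a free resolution `⋯ → R^(ι 1) → R^(ι 0) → k` of
the trivial left `R`-module. Vectors are rows, so that right multiplication by `D n` is linear
over the noncommutative ring `R`; the index type `ι 0` is a singleton, so `R^(ι 0)` is `R`. -/
structure IsFreeResolution (ε : R →ₐ[k] k) (D : ∀ n, Matrix (ι (n + 1)) (ι n) R) : Prop where
  exact : ∀ n, Function.Exact (fun v => v ᵥ* D (n + 1)) (fun v => v ᵥ* D n)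
  exact_aug : Function.Exact (fun v => (v ᵥ* D 0) default) ε

variable {ε : R →ₐ[k] k} {D : ∀ n, Matrix (ι (n + 1)) (ι n) R}

/-- The augmentation `ε`, as a morphism from the free module of rank one. -/
def augmentation (ε : R →ₐ[k] k) (κ : Type) [Unique κ] :
    ModuleCat.of R (κ → R) ⟶ trivialModule ε :=
  letI : Module R k := Module.compHom k ε.toRingHom
  ModuleCat.ofHom ((LinearMap.toSpanSingleton R k 1).comp (LinearMap.proj default))

theorem augmentation_apply {κ : Type} [Unique κ] (v : κ → R) :
    (augmentation ε κ v : k) = ε (v default) :=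
  mul_one (ε (v default))

theorem augmentation_surjective {κ : Type} [Unique κ] :
    Function.Surjective (augmentation ε κ) := fun z : k =>
  ⟨fun _ => algebraMap k R z, (augmentation_apply _).trans (ε.commutes z)⟩

theorem IsFreeResolution.exact_augmentation (res : IsFreeResolution ε D) :
    Function.Exact (ModuleCat.ofHom (D 0).vecMulLinear) (augmentation ε (ι 0)) := by
  intro (v : ι 0 → R)
  refine (Eq.congr_left (augmentation_apply v)).trans ((res.exact_aug (v default)).trans ?_)
  exact exists_congr fun w => (Unique.forall_iff (p := fun i => _ = v i)).symm.trans funext_iff.symm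

/-- The projective resolution of the trivial module with differentials `D`. -/
noncomputable def IsFreeResolution.toProjectiveResolution (res : IsFreeResolution ε D) :
    ProjectiveResolution (trivialModule ε) :=
  have (n : ℕ) : Projective (ModuleCat.of R (ι n → R)) :=
    (IsProjective.iff_projective (R := R) (ι n → R)).1 inferInstance
  resolutionOfExact (X := fun n => ModuleCat.of R (ι n → R))
    (d := fun n => ModuleCat.ofHom (D n).vecMulLinear) res.exact res.exact_augmentation
    augmentation_surjective

theorem IsFreeResolution.toProjectiveResolution_d (res : IsFreeResolution ε D) (n : ℕ) :
    res.toProjectiveResolution.complex.d (n + 1) n = ModuleCat.ofHom (D n).vecMulLinear :=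
  ChainComplex.of_d (fun n => ModuleCat.of R (ι n → R))
    (fun n => ModuleCat.ofHom (D n).vecMulLinear) n

theorem IsFreeResolution.finrank_ext_zero (res : IsFreeResolution ε D) :
    Module.finrank k (((Ext k (ModuleCat R) 0).obj (Opposite.op (trivialModule ε))).obj
      (trivialModule ε)) + ((D 0).map ε).rank = 1 := by
  classical
  have : FiniteDimensional k (res.toProjectiveResolution.complex.X 0 ⟶ trivialModule ε) :=
    (freeHomEquiv ε (ι 0)).symm.finiteDimensional
  have count := finrank_linearYonedaObj_homology_zero (k := k)
    res.toProjectiveResolution.complex (trivialModule ε)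
  rw [res.toProjectiveResolution_d] at count
  rw [(res.toProjectiveResolution.isoExt (R := k) 0 _).toLinearEquiv.finrank_eq,
    ← finrank_range_leftComp_vecMulLinear]
  refine count.trans ((freeHomEquiv ε (ι 0)).finrank_eq.trans ?_)
  simp

theorem IsFreeResolution.finrank_ext_succ (res : IsFreeResolution ε D) (n : ℕ) :
    Module.finrank k (((Ext k (ModuleCat R) (n + 1)).obj (Opposite.op (trivialModule ε))).obj
      (trivialModule ε)) + ((D n).map ε).rank + ((D (n + 1)).map ε).rank =
        Fintype.card (ι (n + 1)) := by
  classical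
  have : FiniteDimensional k (res.toProjectiveResolution.complex.X (n + 1) ⟶ trivialModule ε) :=
    (freeHomEquiv ε (ι (n + 1))).symm.finiteDimensional
  have count := finrank_linearYonedaObj_homology_succ (k := k)
    res.toProjectiveResolution.complex (trivialModule ε) n
  rw [res.toProjectiveResolution_d, res.toProjectiveResolution_d] at count
  rw [(res.toProjectiveResolution.isoExt (R := k) (n + 1) _).toLinearEquiv.finrank_eq,
    ← finrank_range_leftComp_vecMulLinear, ← finrank_range_leftComp_vecMulLinear]
  exact count.trans ((freeHomEquiv ε (ι (n + 1))).finrank_eq.trans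
    (Module.finrank_fintype_fun_eq_card k))

end FreeResolution

section AugmentationIdeal

variable {k R : Type*} [CommRing k] [Ring R] [Algebra k R] {ε : R →ₐ[k] k} {S : Set R}

theorem sub_algebraMap_mem_span (adjoin_eq_top : Algebra.adjoin k S = ⊤)
    (map_eq_zero : ∀ s ∈ S, ε s = 0) (r : R) :
    r - algebraMap k R (ε r) ∈ Ideal.span S := by
  have mem_adjoin : r ∈ Algebra.adjoin k S := adjoin_eq_top ▸ Algebra.mem_top
  induction mem_adjoin using Algebra.adjoin_induction with
  | mem s hs =>
    rw [map_eq_zero s hs, map_zero, sub_zero]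
    exact Ideal.subset_span hs
  | algebraMap z => simp
  | add r s _ _ hr hs =>
    rw [map_add, map_add, add_sub_add_comm]
    exact add_mem hr hs
  | mul r s _ _ hr hs =>
    have split : r * s - algebraMap k R (ε (r * s)) =
        r * (s - algebraMap k R (ε s)) + algebraMap k R (ε s) * (r - algebraMap k R (ε r)) := by
      rw [mul_sub, mul_sub, Algebra.commutes (ε s) r, ← map_mul (algebraMap k R), map_mul ε,
        mul_comm (ε s), sub_add_sub_cancel]
    rw [split]
    exact add_mem (Ideal.mul_mem_left _ _ hs) (Ideal.mul_mem_left _ _ hr)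

theorem map_eq_zero_iff_mem_span (adjoin_eq_top : Algebra.adjoin k S = ⊤)
    (map_eq_zero : ∀ s ∈ S, ε s = 0) (r : R) : ε r = 0 ↔ r ∈ Ideal.span S := by
  constructor
  · intro h
    simpa [h] using sub_algebraMap_mem_span adjoin_eq_top map_eq_zero r
  · intro h
    exact (Ideal.span_le (I := RingHom.ker ε)).2 map_eq_zero h

end AugmentationIdeal

section KoszulTriple

variable {R : Type*} [Ring R] {a b c : R}

/-- Elements `a`, `b`, `c` satisfying the defining relations `ab - ba = b`, `ac = ca`, `bc = -cb`,
`c² = 0` of the enveloping algebra, without further left syzygies: those of `c`, of `b`, and of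
`a`, `b` modulo `c` are the ones forced by the relations. -/
structure IsKoszulTriple (a b c : R) : Prop where
  a_mul_b : a * b = b * a + b
  a_mul_c : a * c = c * a
  b_mul_c : b * c = -(c * b)
  c_mul_c : c * c = 0
  exists_eq_mul_c : ∀ r, r * c = 0 → ∃ s, r = s * c
  isRightRegular_b : IsRightRegular b
  exists_syzygy : ∀ p q r, p * c + q * a + r * b = 0 →
    ∃ q' r' s, q = -(q' * c) - s * b ∧ r = r' * c + s * (a - 1)

/-- The ranks `1, 3, 4, 4, …` of the twisted Koszul resolution. -/
def koszulRank : ℕ → ℕ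
  | 0 => 1
  | 1 => 3
  | _ + 2 => 4

instance : Unique (Fin (koszulRank 0)) := inferInstanceAs (Unique (Fin 1))

/-- The differentials of the twisted Koszul resolution, acting on row vectors: the Koszul complex
of `a`, `b` (twisted by `ab = b(a + 1)`), tensored with the infinite resolution for `c² = 0`. In
degree `n ≥ 2` the four basis vectors correspond to `cⁿ`, `cⁿ⁻¹a`, `cⁿ⁻¹b`, `cⁿ⁻²ab`. -/
def koszulMatrix (a b c : R) : ∀ n, Matrix (Fin (koszulRank (n + 1))) (Fin (koszulRank n)) R
  | 0 => !![c; a; b]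
  | 1 => !![c, 0, 0; a, -c, 0; b, 0, c; 0, -b, a - 1]
  | _ + 2 => !![c, 0, 0, 0; a, -c, 0, 0; b, 0, c, 0; 0, -b, a - 1, -c]

open Matrix

theorem vecMul_koszulMatrix_zero (v : Fin 3 → R) :
    v ᵥ* koszulMatrix a b c 0 = ![v 0 * c + v 1 * a + v 2 * b] := by
  change v ᵥ* !![c; a; b] = _
  ext j
  fin_cases j
  simp [vecMul, dotProduct, Fin.sum_univ_succ, add_assoc]

theorem vecMul_koszulMatrix_one (v : Fin 4 → R) :
    v ᵥ* koszulMatrix a b c 1 = ![v 0 * c + v 1 * a + v 2 * b, -(v 1 * c) - v 3 * b,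
      v 2 * c + v 3 * (a - 1)] := by
  change v ᵥ* !![c, 0, 0; a, -c, 0; b, 0, c; 0, -b, a - 1] = _
  ext j
  fin_cases j <;> simp [vecMul, dotProduct, Fin.sum_univ_succ, add_assoc, sub_eq_add_neg]

theorem vecMul_koszulMatrix_add_two (n : ℕ) (v : Fin 4 → R) :
    v ᵥ* koszulMatrix a b c (n + 2) = ![v 0 * c + v 1 * a + v 2 * b, -(v 1 * c) - v 3 * b,
      v 2 * c + v 3 * (a - 1), -(v 3 * c)] := by
  change v ᵥ* !![c, 0, 0, 0; a, -c, 0, 0; b, 0, c, 0; 0, -b, a - 1, -c] = _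
  ext j
  fin_cases j <;> simp [vecMul, dotProduct, Fin.sum_univ_succ, add_assoc, sub_eq_add_neg]

namespace IsKoszulTriple

theorem b_mul_a (h : IsKoszulTriple a b c) : b * a = (a - 1) * b := by
  rw [sub_mul, h.a_mul_b, one_mul, add_sub_cancel_right]

theorem c_mul_a_sub_one (h : IsKoszulTriple a b c) : c * (a - 1) = (a - 1) * c := by
  rw [mul_sub, sub_mul, h.a_mul_c, mul_one, one_mul]

theorem koszulMatrix_mul (h : IsKoszulTriple a b c) (n : ℕ) :
    koszulMatrix a b c (n + 1) * koszulMatrix a b c n = 0 := by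
  match n with
  | 0 =>
    change !![c, 0, 0; a, -c, 0; b, 0, c; 0, -b, a - 1] * !![c; a; b] = 0
    ext i j
    fin_cases i <;> fin_cases j <;>
      simp [mul_apply, Fin.sum_univ_succ, h.a_mul_c, h.b_mul_c, h.c_mul_c, h.b_mul_a]
  | 1 =>
    change !![c, 0, 0, 0; a, -c, 0, 0; b, 0, c, 0; 0, -b, a - 1, -c] *
      !![c, 0, 0; a, -c, 0; b, 0, c; 0, -b, a - 1] = 0
    ext i j
    fin_cases i <;> fin_cases j <;>
      simp [mul_apply, Fin.sum_univ_succ, h.a_mul_c, h.b_mul_c, h.c_mul_c, h.b_mul_a,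
        h.c_mul_a_sub_one]
  | n + 2 =>
    change !![c, 0, 0, 0; a, -c, 0, 0; b, 0, c, 0; 0, -b, a - 1, -c] *
      !![c, 0, 0, 0; a, -c, 0, 0; b, 0, c, 0; 0, -b, a - 1, -c] = 0
    ext i j
    fin_cases i <;> fin_cases j <;>
      simp [mul_apply, Fin.sum_univ_succ, h.a_mul_c, h.b_mul_c, h.c_mul_c, h.b_mul_a,
        h.c_mul_a_sub_one]

theorem exists_eq_mul_c_add (h : IsKoszulTriple a b c) {p q' r' s : R}
    (eq_zero : p * c + (-(q' * c) - s * b) * a + (r' * c + s * (a - 1)) * b = 0) :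
    ∃ p', p = p' * c + q' * a + r' * b := by
  have annihilated : (p - q' * a - r' * b) * c = 0 := by
    rw [← eq_zero]
    simp only [sub_mul, add_mul, neg_mul, mul_assoc, h.a_mul_c, h.b_mul_c, h.b_mul_a, mul_neg]
    abel
  obtain ⟨p', eq_mul⟩ := h.exists_eq_mul_c _ annihilated
  exact ⟨p', by rw [← eq_mul]; abel⟩

theorem mul_c_eq_zero (h : IsKoszulTriple a b c) {q s : R} (hq : -(q * c) - s * b = 0) :
    s * c = 0 := by
  refine h.isRightRegular_b (Eq.trans ?_ (zero_mul b).symm)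
  calc s * c * b = (-(q * c) - s * b) * c := by
        rw [sub_mul, neg_mul, mul_assoc q, h.c_mul_c, mul_assoc s b, h.b_mul_c]
        noncomm_ring
    _ = 0 := by rw [hq, zero_mul]

theorem exists_preimage (h : IsKoszulTriple a b c) {p q r s : R} (hp : p * c + q * a + r * b = 0)
    (hq : -(q * c) - s * b = 0) (hr : r * c + s * (a - 1) = 0) :
    ∃ p' q' r' s', p' * c + q' * a + r' * b = p ∧ -(q' * c) - s' * b = q ∧
      r' * c + s' * (a - 1) = r ∧ -(s' * c) = s := by
  obtain ⟨t, rfl⟩ := h.exists_eq_mul_c s (h.mul_c_eq_zero hq)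
  obtain ⟨q', q_eq⟩ := h.exists_eq_mul_c (q - t * b) (by
    rw [← neg_eq_zero, ← hq, sub_mul, mul_assoc t b, h.b_mul_c, mul_neg, mul_assoc t]
    abel)
  obtain ⟨r', r_eq⟩ := h.exists_eq_mul_c (r + t * (a - 1)) (by
    rw [← hr, add_mul, mul_assoc, ← h.c_mul_a_sub_one, mul_assoc])
  obtain rfl : q = -(-q' * c) - -t * b := by
    rw [neg_mul, neg_neg, ← q_eq]; noncomm_ring
  obtain rfl : r = r' * c + -t * (a - 1) := by
    rw [← r_eq]; noncomm_ring
  obtain ⟨p', rfl⟩ := h.exists_eq_mul_c_add hp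
  exact ⟨p', -q', r', -t, rfl, rfl, rfl, by rw [neg_mul, neg_neg]⟩

theorem exists_vecMul_koszulMatrix_one_eq (h : IsKoszulTriple a b c) (v : Fin 3 → R)
    (hv : v ᵥ* koszulMatrix a b c 0 = 0) : ∃ w, w ᵥ* koszulMatrix a b c 1 = v := by
  rw [vecMul_koszulMatrix_zero] at hv
  have v_syzygy : v 0 * c + v 1 * a + v 2 * b = 0 := congrFun hv 0
  obtain ⟨q', r', s, hq, hr⟩ := h.exists_syzygy _ _ _ v_syzygy
  rw [hq, hr] at v_syzygy
  obtain ⟨p', hp⟩ := h.exists_eq_mul_c_add v_syzygy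
  refine ⟨![p', q', r', s], (vecMul_koszulMatrix_one _).trans (funext fun i => ?_)⟩
  fin_cases i
  exacts [hp.symm, hq.symm, hr.symm]

theorem exists_vecMul_koszulMatrix_add_two_eq (h : IsKoszulTriple a b c) (n : ℕ) (v : Fin 4 → R)
    (hp : v 0 * c + v 1 * a + v 2 * b = 0) (hq : -(v 1 * c) - v 3 * b = 0)
    (hr : v 2 * c + v 3 * (a - 1) = 0) : ∃ w, w ᵥ* koszulMatrix a b c (n + 2) = v := by
  obtain ⟨p', q', r', s', hp', hq', hr', hs'⟩ := h.exists_preimage hp hq hr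
  refine ⟨![p', q', r', s'], (vecMul_koszulMatrix_add_two n _).trans (funext fun i => ?_)⟩
  fin_cases i
  exacts [hp', hq', hr', hs']

theorem exists_vecMul_koszulMatrix_succ_eq (h : IsKoszulTriple a b c) (n : ℕ)
    (v : Fin (koszulRank (n + 1)) → R)
    (hv : v ᵥ* koszulMatrix a b c n = 0) : ∃ w, w ᵥ* koszulMatrix a b c (n + 1) = v := by
  match n with
  | 0 => exact h.exists_vecMul_koszulMatrix_one_eq v hv
  | 1 =>
    replace hv := (vecMul_koszulMatrix_one v).symm.trans hv
    exact h.exists_vecMul_koszulMatrix_add_two_eq 0 v (congrFun hv 0) (congrFun hv 1)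
      (congrFun hv 2)
  | n + 2 =>
    replace hv := (vecMul_koszulMatrix_add_two n v).symm.trans hv
    exact h.exists_vecMul_koszulMatrix_add_two_eq (n + 1) v (congrFun hv 0) (congrFun hv 1)
      (congrFun hv 2)

theorem exact_koszulMatrix (h : IsKoszulTriple a b c) (n : ℕ) :
    Function.Exact (fun v => v ᵥ* koszulMatrix a b c (n + 1))
      (fun v => v ᵥ* koszulMatrix a b c n) := fun v =>
  ⟨h.exists_vecMul_koszulMatrix_succ_eq n v, by
    rintro ⟨w, rfl⟩
    dsimp only
    rw [vecMul_vecMul, h.koszulMatrix_mul, vecMul_zero]⟩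

end IsKoszulTriple

end KoszulTriple

section KoszulResolution

variable {k R : Type u} [Field k] [Ring R] [Algebra k R] {a b c : R} {ε : R →ₐ[k] k}

open Matrix

theorem IsKoszulTriple.isFreeResolution (h : IsKoszulTriple a b c)
    (adjoin_eq_top : Algebra.adjoin k {c, a, b} = ⊤) (ha : ε a = 0) (hb : ε b = 0)
    (hc : ε c = 0) :
    IsFreeResolution (ι := fun n => Fin (koszulRank n)) ε (koszulMatrix a b c) where
  exact := h.exact_koszulMatrix
  exact_aug r := by
    have map_eq_zero : ∀ s ∈ ({c, a, b} : Set R), ε s = 0 := by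
      rintro s (rfl | rfl | rfl) <;> assumption
    rw [map_eq_zero_iff_mem_span adjoin_eq_top map_eq_zero, Ideal.span, Submodule.mem_span_triple]
    constructor
    · rintro ⟨p, q, s, rfl⟩
      exact ⟨![p, q, s], congrFun (vecMul_koszulMatrix_zero _) (0 : Fin 1)⟩
    · rintro ⟨(v : Fin 3 → R), rfl⟩
      exact ⟨v 0, v 1, v 2, (congrFun (vecMul_koszulMatrix_zero v) (0 : Fin 1)).symm⟩

theorem rank_map_koszulMatrix_zero (ha : ε a = 0) (hb : ε b = 0) (hc : ε c = 0) :
    ((koszulMatrix a b c 0).map ε).rank = 0 := by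
  have map_eq_zero : (koszulMatrix a b c 0).map ε = 0 := by
    change (!![c; a; b] : Matrix (Fin 3) (Fin 1) R).map ε = 0
    ext i j
    fin_cases i <;> fin_cases j <;> simp [ha, hb, hc]
  rw [map_eq_zero, rank_zero]

theorem rank_single_of_ne_zero {m n : Type*} [Fintype n] [DecidableEq m] [DecidableEq n]
    (i : m) (j : n) {x : k} (hx : x ≠ 0) : (single i j x).rank = 1 := by
  have mulVecLin_eq (w : n → k) : (single i j x).mulVecLin w = Pi.single i (x * w j) :=
    single_mulVec i j x w
  have range_eq : LinearMap.range (single i j x).mulVecLin =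
      Submodule.span k {(Pi.single i 1 : m → k)} := by
    refine le_antisymm ?_ ((Submodule.span_singleton_le_iff_mem _ _).2 ?_)
    · rintro _ ⟨w, rfl⟩
      exact Submodule.mem_span_singleton.2 ⟨x * w j, by
        rw [mulVecLin_eq, ← Pi.single_smul, smul_eq_mul, mul_one]⟩
    · exact ⟨Pi.single j x⁻¹, by rw [mulVecLin_eq, Pi.single_eq_same, mul_inv_cancel₀ hx]⟩
  rw [rank, range_eq, finrank_span_singleton]
  exact Pi.single_ne_zero_iff.2 one_ne_zero

theorem map_koszulMatrix_one (ha : ε a = 0) (hb : ε b = 0) (hc : ε c = 0) :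
    (koszulMatrix a b c 1).map ε = (single 3 2 (-1) : Matrix (Fin 4) (Fin 3) k) := by
  change (!![c, 0, 0; a, -c, 0; b, 0, c; 0, -b, a - 1] : Matrix (Fin 4) (Fin 3) R).map ε = _
  ext i j
  fin_cases i <;> fin_cases j <;> simp [ha, hb, hc]

theorem map_koszulMatrix_add_two (ha : ε a = 0) (hb : ε b = 0) (hc : ε c = 0) (n : ℕ) :
    (koszulMatrix a b c (n + 2)).map ε = (single 3 2 (-1) : Matrix (Fin 4) (Fin 4) k) := by
  change (!![c, 0, 0, 0; a, -c, 0, 0; b, 0, c, 0; 0, -b, a - 1, -c] :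
    Matrix (Fin 4) (Fin 4) R).map ε = _
  ext i j
  fin_cases i <;> fin_cases j <;> simp [ha, hb, hc]

theorem rank_map_koszulMatrix_succ (ha : ε a = 0) (hb : ε b = 0) (hc : ε c = 0) (n : ℕ) :
    ((koszulMatrix a b c (n + 1)).map ε).rank = 1 := by
  match n with
  | 0 =>
    rw [map_koszulMatrix_one ha hb hc]
    exact rank_single_of_ne_zero _ _ (neg_ne_zero.2 one_ne_zero)
  | n + 1 =>
    rw [map_koszulMatrix_add_two ha hb hc]
    exact rank_single_of_ne_zero _ _ (neg_ne_zero.2 one_ne_zero)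

theorem IsKoszulTriple.finrank_ext_zero (h : IsKoszulTriple a b c)
    (adjoin_eq_top : Algebra.adjoin k {c, a, b} = ⊤) (ha : ε a = 0) (hb : ε b = 0)
    (hc : ε c = 0) :
    Module.finrank k (((Ext k (ModuleCat R) 0).obj (Opposite.op (trivialModule ε))).obj
      (trivialModule ε)) = 1 := by
  have count := (h.isFreeResolution adjoin_eq_top ha hb hc).finrank_ext_zero
  rwa [rank_map_koszulMatrix_zero ha hb hc] at count

theorem IsKoszulTriple.finrank_ext_succ (h : IsKoszulTriple a b c)
    (adjoin_eq_top : Algebra.adjoin k {c, a, b} = ⊤) (ha : ε a = 0) (hb : ε b = 0)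
    (hc : ε c = 0) (n : ℕ) :
    Module.finrank k (((Ext k (ModuleCat R) (n + 1)).obj (Opposite.op (trivialModule ε))).obj
      (trivialModule ε)) = 2 := by
  have count := (h.isFreeResolution adjoin_eq_top ha hb hc).finrank_ext_succ n
  rw [Fintype.card_fin, rank_map_koszulMatrix_succ ha hb hc] at count
  cases n with
  | zero =>
    rw [rank_map_koszulMatrix_zero ha hb hc] at count
    simpa [koszulRank] using count
  | succ n =>
    rw [rank_map_koszulMatrix_succ ha hb hc] at count
    simpa [koszulRank] using count

end KoszulResolution

section SkewPolynomial

open SkewPolynomial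

variable {A : Type*} [Ring A] [MulSemiringAction (Multiplicative ℕ) A]

theorem X_mul_C (x : A) : (X : SkewPolynomial A) * C x = C (φ x) * X := by
  rw [← monomial_zero_left, X_mul_monomial, ← monomial_zero_left, monomial_mul_X]

theorem coeff_mul_C (p : SkewPolynomial A) (x : A) (n : ℕ) :
    (p * C x).coeff n = p.coeff n * φ^[n] x := by
  rw [φ_iterate_apply]
  exact SkewMonoidAlgebra.coeff_mul_single_one p x _

theorem coeff_mul_X_zero (p : SkewPolynomial A) : (p * X).coeff 0 = 0 :=
  SkewMonoidAlgebra.coeff_mul_single_of_not_exists_mul _ p fun m hm =>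
    Nat.succ_ne_zero m.toAdd (congrArg Multiplicative.toAdd hm).symm

theorem coeff_mul_X_succ (p : SkewPolynomial A) (n : ℕ) : (p * X).coeff (n + 1) = p.coeff n := by
  have coeff_eq := SkewMonoidAlgebra.coeff_mul_single_aux (f := p) (r := (1 : A))
    (x := Multiplicative.ofAdd 1) (y := Multiplicative.ofAdd n)
    (z := Multiplicative.ofAdd (n + 1)) fun m => by rw [ofAdd_add, mul_left_inj]
  rwa [smul_one, mul_one] at coeff_eq

theorem isRightRegular_X : IsRightRegular (X : SkewPolynomial A) := fun p q h =>
  SkewPolynomial.ext fun n => by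
    simpa only [coeff_mul_X_succ] using congrArg (coeff · (n + 1)) h

theorem exists_eq_C_add_mul_X (p : SkewPolynomial A) : ∃ x q, p = C x + q * X := by
  induction p using SkewPolynomial.induction with
  | h0 => exact ⟨0, 0, by rw [map_zero, zero_mul, add_zero]⟩
  | ha n r q _ _ ih =>
    obtain ⟨x, q, rfl⟩ := ih
    cases n with
    | zero => exact ⟨r + x, q, by rw [monomial_zero_left, map_add, add_assoc]⟩
    | succ n => exact ⟨x, monomial n r + q, by rw [add_mul, monomial_mul_X, add_left_comm]⟩

variable {a c : A}

theorem iterate_φ_eq_or_neg (hc : φ c = -c) (n : ℕ) : φ^[n] c = c ∨ φ^[n] c = -c := by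
  induction n with
  | zero => exact Or.inl rfl
  | succ n ih =>
    rw [Function.iterate_succ_apply']
    rcases ih with ih | ih
    · exact Or.inr (by rw [ih, hc])
    · exact Or.inl (by rw [ih, map_neg, hc, neg_neg])

theorem exists_eq_mul_C_of_mul_C_eq_zero (hc : φ c = -c)
    (exists_eq_mul_c : ∀ x, x * c = 0 → ∃ y, x = y * c) (p : SkewPolynomial A)
    (hp : p * C c = 0) : ∃ q, p = q * C c := by
  have monomial_mem (n : ℕ) : monomial n (p.coeff n) ∈ Ideal.span {C c} := by
    have coeff_mul_iterate : p.coeff n * φ^[n] c = 0 := by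
      rw [← coeff_mul_C, hp, coeff_zero]
    rcases iterate_φ_eq_or_neg hc n with iterate_eq | iterate_eq
    · obtain ⟨y, hy⟩ := exists_eq_mul_c (p.coeff n) (by rwa [iterate_eq] at coeff_mul_iterate)
      exact Ideal.mem_span_singleton'.2 ⟨monomial n y, by rw [monomial_mul_C, iterate_eq, hy]⟩
    · obtain ⟨y, hy⟩ := exists_eq_mul_c (p.coeff n) (by
        rwa [iterate_eq, mul_neg, neg_eq_zero] at coeff_mul_iterate)
      exact Ideal.mem_span_singleton'.2 ⟨monomial n (-y), by
        rw [monomial_mul_C, iterate_eq, neg_mul_neg, hy]⟩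
  have p_mem : p ∈ Ideal.span {C c} := by
    rw [← sum_monomial p, sum_def]
    exact sum_mem fun n _ => monomial_mem n
  obtain ⟨q, rfl⟩ := Ideal.mem_span_singleton'.1 p_mem
  exact ⟨q, rfl⟩

theorem exists_syzygy_C_X (ha : φ a = a - 1) (hc : φ c = -c)
    (exists_syzygy : ∀ x y, x * c + y * a = 0 → ∃ z, y = z * c) (p q r : SkewPolynomial A)
    (h : p * C c + q * C a + r * X = 0) :
    ∃ q' r' s, q = -(q' * C c) - s * X ∧ r = r' * C c + s * (C a - 1) := by
  obtain ⟨x, p, rfl⟩ := exists_eq_C_add_mul_X p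
  obtain ⟨y, q, rfl⟩ := exists_eq_C_add_mul_X q
  have split : C (x * c + y * a) + (q * (C a - 1) - p * C c + r) * X = 0 := by
    rw [← h]
    simp only [add_mul, sub_mul, mul_assoc, X_mul_C, ha, hc, C_mul, C_add, C_sub, C_neg, C_1,
      neg_mul, mul_neg, one_mul]
    abel
  have constant_eq_zero : x * c + y * a = 0 := by
    simpa [coeff_mul_X_zero] using congrArg (coeff · 0) split
  obtain ⟨z, rfl⟩ := exists_syzygy x y constant_eq_zero
  rw [constant_eq_zero, C_0, zero_add] at split
  have remainder_eq_zero := isRightRegular_X (split.trans (zero_mul X).symm)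
  refine ⟨-C z, p, -q, by rw [C_mul]; noncomm_ring, ?_⟩
  rw [← sub_eq_zero, ← remainder_eq_zero]
  noncomm_ring

theorem isKoszulTriple_C_X (ha : φ a = a - 1) (hc : φ c = -c) (a_mul_c : a * c = c * a)
    (c_mul_c : c * c = 0) (exists_eq_mul_c : ∀ x, x * c = 0 → ∃ y, x = y * c)
    (exists_syzygy : ∀ x y, x * c + y * a = 0 → ∃ z, y = z * c) :
    IsKoszulTriple (C a) X (C c) where
  a_mul_b := by rw [X_mul_C, ha, C_sub, C_1, sub_mul, one_mul, sub_add_cancel]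
  a_mul_c := by rw [← C_mul, a_mul_c, C_mul]
  b_mul_c := by rw [X_mul_C, hc, C_neg, neg_mul]
  c_mul_c := by rw [← C_mul, c_mul_c, C_0]
  exists_eq_mul_c := exists_eq_mul_C_of_mul_C_eq_zero hc exists_eq_mul_c
  isRightRegular_b := isRightRegular_X
  exists_syzygy := exists_syzygy_C_X ha hc exists_syzygy

end SkewPolynomial

section SkewLift

open SkewPolynomial

variable {k A B : Type*} [CommRing k] [Ring A] [Algebra k A]
  [MulSemiringAction (Multiplicative ℕ) A] [SMulCommClass (Multiplicative ℕ) k A]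
  [Ring B] [Algebra k B]

/-- The algebra homomorphism `∑ xₙ Xⁿ ↦ ∑ f xₙ bⁿ` out of a skew polynomial ring, for an element
`b` that intertwines `f` and `f ∘ φ`. -/
noncomputable def skewLift (f : A →ₐ[k] B) (b : B) (hb : ∀ x, SemiconjBy b (f x) (f (φ x))) :
    SkewPolynomial A →ₐ[k] B :=
  SkewMonoidAlgebra.liftNCAlgHom f (powersHom B b) fun {x y} => by
    induction y using Multiplicative.rec with | ofAdd n => ?_
    rw [powersHom_apply, toAdd_ofAdd, ← φ_iterate_apply]
    induction n with
    | zero => rw [Function.iterate_zero_apply, pow_zero, mul_one, one_mul]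
    | succ n ih =>
      rw [Function.iterate_succ_apply', pow_succ', ← mul_assoc, ← (hb _).eq, mul_assoc, ih,
        mul_assoc]

variable {f : A →ₐ[k] B} {b : B} {hb : ∀ x, SemiconjBy b (f x) (f (φ x))}

theorem skewLift_C (x : A) : skewLift f b hb (C x) = f x := by
  refine (SkewMonoidAlgebra.liftNC_single _ _ _ _).trans ?_
  simp

theorem skewLift_X : skewLift f b hb X = b := by
  refine (SkewMonoidAlgebra.liftNC_single _ _ _ _).trans ?_
  simp

theorem skewPolynomial_algHom_ext {F G : SkewPolynomial A →ₐ[k] B}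
    (hC : ∀ x, F (C x) = G (C x)) (hX : F X = G X) : F = G := by
  have map_monomial (n : ℕ) (x : A) : F (monomial n x) = G (monomial n x) := by
    rw [← C_mul_X_pow_eq_monomial, map_mul, map_pow, hC, hX, map_mul, map_pow]
  ext p
  exact DFunLike.congr_fun (addHom_ext (f := F.toAddMonoidHom) (g := G.toAddMonoidHom)
    map_monomial) p

end SkewLift

section Twist

open SkewPolynomial

variable {k : Type*} [CommRing k]

/-- The substitution `a ↦ a - 1`, `c ↦ -c` of `k[a][c]/(c²)`, realised as the dual numbers over
`k[a]` with `c` for `DualNumber.eps`. -/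
noncomputable def twist : DualNumber (Polynomial k) →ₐ[k] DualNumber (Polynomial k) :=
  DualNumber.lift ⟨((TrivSqZeroExt.inlAlgHom k _ _).comp (Polynomial.aeval (Polynomial.X - 1)),
    -DualNumber.eps), by rw [neg_mul_neg, DualNumber.eps_mul_eps],
    fun _ => (DualNumber.commute_eps_left _).neg_left⟩

noncomputable instance : MulSemiringAction (Multiplicative ℕ) (DualNumber (Polynomial k)) :=
  MulSemiringAction.compHom _ (powersHom (_ →+* _) (twist (k := k)).toRingHom)

theorem φ_eq_twist (x : DualNumber (Polynomial k)) : φ x = twist x := by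
  change ((twist (k := k)).toRingHom ^ 1) x = _
  rw [pow_one]
  rfl

instance : SMulCommClass (Multiplicative ℕ) k (DualNumber (Polynomial k)) where
  smul_comm m r x := by
    induction m using Multiplicative.rec with | ofAdd n => ?_
    simp only [← φ_iterate_apply]
    induction n with
    | zero => rfl
    | succ n ih =>
      simp only [Function.iterate_succ_apply', ih, φ_eq_twist, map_smul]

/-- The polynomial variable of `k[a][c]/(c²)`. -/
noncomputable def dualX : DualNumber (Polynomial k) := TrivSqZeroExt.inl Polynomial.X

theorem twist_dualX : twist (dualX (k := k)) = dualX - 1 := by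
  simp [twist, dualX]

theorem twist_eps : twist (DualNumber.eps : DualNumber (Polynomial k)) = -DualNumber.eps := by
  simp [twist]

theorem inl_mem_adjoin_dualX (p : Polynomial k) :
    TrivSqZeroExt.inl p ∈ Algebra.adjoin k {dualX (k := k)} := by
  have aeval_dualX : Polynomial.aeval dualX p = TrivSqZeroExt.inl p :=
    (Polynomial.aeval_algHom_apply (TrivSqZeroExt.inlAlgHom k _ _) Polynomial.X p).trans
      (by rw [Polynomial.aeval_X_left_apply]; rfl)
  exact aeval_dualX ▸ Polynomial.aeval_mem_adjoin_singleton k dualX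

theorem adjoin_dualX_eps :
    Algebra.adjoin k {dualX (k := k), DualNumber.eps} = ⊤ := by
  refine Algebra.eq_top_iff.2 fun x => ?_
  have inl_mem (p : Polynomial k) :
      TrivSqZeroExt.inl p ∈ Algebra.adjoin k {dualX (k := k), DualNumber.eps} :=
    Algebra.adjoin_mono (Set.singleton_subset_iff.2 (Set.mem_insert _ _)) (inl_mem_adjoin_dualX p)
  rw [← TrivSqZeroExt.inl_fst_add_inr_snd_eq x, DualNumber.inr_eq_smul_eps,
    ← TrivSqZeroExt.inl_mul_eq_smul]
  exact add_mem (inl_mem _) (mul_mem (inl_mem _) (Algebra.subset_adjoin (by simp)))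

theorem exists_eq_mul_eps_of_fst_eq_zero {R : Type*} [CommRing R] {x : DualNumber R}
    (hx : x.fst = 0) : ∃ y, x = y * DualNumber.eps := by
  obtain ⟨y, rfl⟩ := DualNumber.fst_eq_zero_iff_eps_dvd.1 hx
  exact ⟨y, mul_comm _ _⟩

theorem isKoszulTriple_dualX_X_eps :
    IsKoszulTriple (R := SkewPolynomial (DualNumber (Polynomial k)))
      (C dualX) X (C DualNumber.eps) := by
  refine isKoszulTriple_C_X ?_ ?_ (mul_comm _ _) DualNumber.eps_mul_eps ?_ ?_
  · rw [φ_eq_twist, twist_dualX]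
  · rw [φ_eq_twist, twist_eps]
  · intro x hx
    refine exists_eq_mul_eps_of_fst_eq_zero ?_
    simpa using congrArg TrivSqZeroExt.snd hx
  · intro x y hxy
    refine exists_eq_mul_eps_of_fst_eq_zero ?_
    simpa [dualX] using congrArg TrivSqZeroExt.fst hxy

end Twist

section Envelope

open SkewPolynomial

theorem semiconjBy_of_adjoin_eq_top {k A B : Type*} [CommRing k] [Ring A] [Algebra k A] [Ring B]
    [Algebra k B] {f g : A →ₐ[k] B} {b : B} {S : Set A} (adjoin_eq_top : Algebra.adjoin k S = ⊤)
    (semiconjBy : ∀ s ∈ S, SemiconjBy b (f s) (g s)) (x : A) : SemiconjBy b (f x) (g x) := by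
  have mem_adjoin : x ∈ Algebra.adjoin k S := adjoin_eq_top ▸ Algebra.mem_top
  induction mem_adjoin using Algebra.adjoin_induction with
  | mem s hs => exact semiconjBy s hs
  | algebraMap r =>
    rw [AlgHom.commutes, AlgHom.commutes]
    exact Algebra.commute_algebraMap_right r b
  | add x y _ _ hx hy =>
    rw [map_add, map_add]
    exact hx.add_right hy
  | mul x y _ _ hx hy =>
    rw [map_mul, map_mul]
    exact hx.mul_right hy

/-- The images of `e1`, `e2`, `e3` in the color Lie enveloping algebra. -/
noncomputable def gen (i : Fin 3) : RingQuot CRel := RingQuot.mkAlgHom ℂ CRel (ι ℂ i)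

theorem gen_zero_mul_gen_one : gen 0 * gen 1 = gen 1 * gen 0 + gen 1 := by
  rw [← sub_eq_iff_eq_add']
  simpa [gen] using RingQuot.mkAlgHom_rel ℂ CRel.r12

theorem gen_zero_mul_gen_two : gen 0 * gen 2 = gen 2 * gen 0 := by
  rw [← sub_eq_zero]
  simpa [gen] using RingQuot.mkAlgHom_rel ℂ CRel.r13

theorem gen_one_mul_gen_two : gen 1 * gen 2 = -(gen 2 * gen 1) := by
  rw [eq_neg_iff_add_eq_zero]
  simpa [gen] using RingQuot.mkAlgHom_rel ℂ CRel.r23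

theorem gen_two_mul_gen_two : gen 2 * gen 2 = 0 := by
  simpa [gen] using RingQuot.mkAlgHom_rel ℂ CRel.r33

theorem adjoin_gen : Algebra.adjoin ℂ {gen 2, gen 0, gen 1} = ⊤ := by
  have range_subset : Set.range gen ⊆ {gen 2, gen 0, gen 1} := by
    rintro _ ⟨i, rfl⟩
    fin_cases i <;> simp
  have adjoin_range : Algebra.adjoin ℂ (Set.range gen) = ⊤ := by
    change Algebra.adjoin ℂ (Set.range (RingQuot.mkAlgHom ℂ CRel ∘ ι ℂ)) = ⊤
    rw [Set.range_comp, ← AlgHom.map_adjoin, FreeAlgebra.adjoin_range_ι, Algebra.map_top,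
      AlgHom.range_eq_top]
    exact RingQuot.mkAlgHom_surjective ℂ CRel
  exact top_le_iff.1 (adjoin_range.ge.trans (Algebra.adjoin_mono range_subset))

theorem ringQuot_algHom_ext {B : Type*} [Ring B] [Algebra ℂ B] {F G : RingQuot CRel →ₐ[ℂ] B}
    (h : ∀ i, F (gen i) = G (gen i)) : F = G :=
  RingQuot.ringQuot_ext' _ _ _ (FreeAlgebra.hom_ext (funext h))

/-- Writes an element of the enveloping algebra as a polynomial in `e2` with left coefficients in
`ℂ[e1][e3]/(e3²)`. -/
noncomputable def toSkew : RingQuot CRel →ₐ[ℂ] SkewPolynomial (DualNumber (Polynomial ℂ)) :=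
  RingQuot.liftAlgHom ℂ ⟨FreeAlgebra.lift ℂ ![C dualX, X, C DualNumber.eps], fun _ _ r => by
    have h := isKoszulTriple_dualX_X_eps (k := ℂ)
    cases r with
    | r12 => simp [h.a_mul_b]
    | r13 => simp [h.a_mul_c]
    | r23 => simp [h.b_mul_c]
    | r33 => simp [h.c_mul_c]⟩

theorem toSkew_gen (i : Fin 3) : toSkew (gen i) = ![C dualX, X, C DualNumber.eps] i := by
  rw [toSkew, gen, RingQuot.liftAlgHom_mkAlgHom_apply, FreeAlgebra.lift_ι_apply]

/-- The inclusion of `ℂ[e1][e3]/(e3²)` into the enveloping algebra. -/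
noncomputable def ofDual : DualNumber (Polynomial ℂ) →ₐ[ℂ] RingQuot CRel :=
  DualNumber.lift ⟨(Polynomial.aeval (gen 0), gen 2), gen_two_mul_gen_two,
    fun _ =>
      Algebra.commute_of_mem_adjoin_singleton_of_commute
        (Polynomial.aeval_mem_adjoin_singleton ℂ _) gen_zero_mul_gen_two.symm⟩

theorem ofDual_dualX : ofDual dualX = gen 0 := by simp [ofDual, dualX]

theorem ofDual_eps : ofDual DualNumber.eps = gen 2 := by simp [ofDual]

theorem semiconjBy_ofDual_twist (x : DualNumber (Polynomial ℂ)) :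
    SemiconjBy (gen 1) (ofDual x) (ofDual (twist x)) := by
  refine semiconjBy_of_adjoin_eq_top (g := ofDual.comp twist) adjoin_dualX_eps ?_ x
  rintro s (rfl | rfl)
  · rw [AlgHom.comp_apply, twist_dualX, map_sub, map_one, ofDual_dualX, SemiconjBy, sub_mul,
      gen_zero_mul_gen_one, one_mul, add_sub_cancel_right]
  · rw [AlgHom.comp_apply, twist_eps, map_neg, ofDual_eps]
    exact gen_one_mul_gen_two.trans (neg_mul (gen 2) (gen 1)).symm

/-- Evaluates a skew polynomial at `e2`, with coefficients read in the enveloping algebra. -/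
noncomputable def ofSkew : SkewPolynomial (DualNumber (Polynomial ℂ)) →ₐ[ℂ] RingQuot CRel :=
  skewLift ofDual (gen 1) fun x => by
    rw [φ_eq_twist]
    exact semiconjBy_ofDual_twist x

theorem ofSkew_comp_toSkew : ofSkew.comp toSkew = AlgHom.id ℂ _ := by
  refine ringQuot_algHom_ext fun i => ?_
  rw [AlgHom.comp_apply, toSkew_gen]
  fin_cases i
  · exact (skewLift_C _).trans ofDual_dualX
  · exact skewLift_X
  · exact (skewLift_C _).trans ofDual_eps

theorem toSkew_ofDual (x : DualNumber (Polynomial ℂ)) : toSkew (ofDual x) = C x := by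
  refine DFunLike.congr_fun (AlgHom.ext_of_adjoin_eq_top (φ₁ := toSkew.comp ofDual)
    (φ₂ := ⟨CRingHom, fun _ => rfl⟩) adjoin_dualX_eps ?_) x
  rintro s (rfl | rfl)
  · exact (congrArg toSkew ofDual_dualX).trans (toSkew_gen 0)
  · exact (congrArg toSkew ofDual_eps).trans (toSkew_gen 2)

theorem toSkew_comp_ofSkew : toSkew.comp ofSkew = AlgHom.id ℂ _ := by
  refine skewPolynomial_algHom_ext (fun x => ?_) ?_
  · rw [AlgHom.comp_apply, ofSkew, skewLift_C]
    exact toSkew_ofDual x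
  · rw [AlgHom.comp_apply, ofSkew, skewLift_X]
    exact toSkew_gen 1

/-- The enveloping algebra is a skew polynomial ring in `e2` over `ℂ[e1][e3]/(e3²)`. -/
noncomputable def skewEquiv : RingQuot CRel ≃ₐ[ℂ] SkewPolynomial (DualNumber (Polynomial ℂ)) :=
  AlgEquiv.ofAlgHom toSkew ofSkew toSkew_comp_ofSkew ofSkew_comp_toSkew

theorem IsKoszulTriple.of_ringEquiv {R S : Type*} [Ring R] [Ring S] {a b c : R} (e : R ≃+* S)
    (h : IsKoszulTriple (e a) (e b) (e c)) : IsKoszulTriple a b c where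
  a_mul_b := e.injective (by simpa using h.a_mul_b)
  a_mul_c := e.injective (by simpa using h.a_mul_c)
  b_mul_c := e.injective (by simpa using h.b_mul_c)
  c_mul_c := e.injective (by simpa using h.c_mul_c)
  exists_eq_mul_c r hr := by
    obtain ⟨s, hs⟩ := h.exists_eq_mul_c (e r) (by rw [← map_mul, hr, map_zero])
    exact ⟨e.symm s, e.injective (by simpa using hs)⟩
  isRightRegular_b r s hrs := e.injective (h.isRightRegular_b (by simpa using congrArg e hrs))
  exists_syzygy p q r hpqr := by
    obtain ⟨q', r', s, hq, hr⟩ := h.exists_syzygy (e p) (e q) (e r)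
      (by simpa using congrArg e hpqr)
    exact ⟨e.symm q', e.symm r', e.symm s, e.injective (by simpa using hq),
      e.injective (by simpa using hr)⟩

theorem isKoszulTriple_gen : IsKoszulTriple (gen 0) (gen 1) (gen 2) := by
  refine IsKoszulTriple.of_ringEquiv skewEquiv.toRingEquiv ?_
  change IsKoszulTriple (toSkew (gen 0)) (toSkew (gen 1)) (toSkew (gen 2))
  rw [toSkew_gen, toSkew_gen, toSkew_gen]
  exact isKoszulTriple_dualX_X_eps

end Envelope

theorem mk_mul_one_sub_X {S : Type*} [CommRing S] {f : ℕ → S} (zero : f 0 = 1)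
    (succ : ∀ n, f (n + 1) = 2) :
    PowerSeries.mk f * (1 - PowerSeries.X) = 1 + PowerSeries.X := by
  ext n
  rw [mul_sub, mul_one, map_sub, map_add, PowerSeries.coeff_mk]
  match n with
  | 0 => simp [zero]
  | 1 =>
    rw [PowerSeries.coeff_succ_mul_X, PowerSeries.coeff_mk, zero, succ, PowerSeries.coeff_one,
      PowerSeries.coeff_one_X]
    norm_num
  | n + 2 =>
    rw [PowerSeries.coeff_succ_mul_X, PowerSeries.coeff_mk, succ, succ, PowerSeries.coeff_one,
      PowerSeries.coeff_X]
    simp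

end ColorLie

theorem betti_numbers (ε : RingQuot CRel →ₐ[ℂ] ℂ)
    (hε : ∀ i : Fin 3, ε (RingQuot.mkAlgHom ℂ CRel (ι ℂ i)) = 0) :
    (extDim (RingQuot CRel) ε 0 = 1 ∧ ∀ n ≥ 1, extDim (RingQuot CRel) ε n = 2) ∧
    (PowerSeries.mk fun n => (extDim (RingQuot CRel) ε n : ℚ)) * (1 - PowerSeries.X) =
      1 + PowerSeries.X := by
  have dim_zero : extDim (RingQuot CRel) ε 0 = 1 :=
    ColorLie.isKoszulTriple_gen.finrank_ext_zero ColorLie.adjoin_gen (hε 0) (hε 1) (hε 2)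
  have dim_succ (n : ℕ) : extDim (RingQuot CRel) ε (n + 1) = 2 :=
    ColorLie.isKoszulTriple_gen.finrank_ext_succ ColorLie.adjoin_gen (hε 0) (hε 1) (hε 2) n
  refine ⟨⟨dim_zero, fun n hn => ?_⟩, ColorLie.mk_mul_one_sub_X ?_ fun n => ?_⟩
  · obtain ⟨m, rfl⟩ := Nat.exists_eq_add_of_le' hn
    exact dim_succ m
  · rw [dim_zero, Nat.cast_one]
  · rw [dim_succ, Nat.cast_ofNat]
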